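/- Let m ≥ 1, n ≥ 1 be integers and μ ∈ ℝ with m+μ+2n+1 ≠ 0. Define τ_{m,n}^{(μ)}(z) = det[(z d/dz)^{j+k} L_{m+n}^{(n+μ)}(z)]_{j,k=0}^{n−1}. Then the rational function w_{m,n}(z) = ((m+μ+2n)/(m+μ+2n+1))^n · τ_{m−1,n}^{(μ)}(z) τ_{m−1,n+1}^{(μ)}(z) / (τ_{m,n}^{(μ)}(z) τ_{m−2,n+1}^{(μ)}(z)) is a solution of P_V with parameters α = m²/2, β = −(m+2n+1+μ)²/2, γ = μ. -/

import Mathlib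

noncomputable section

open Finset

/-- Generalized binomial coefficient `C(x, k)` for real `x`. -/
def genBinom (x : ℝ) (k : ℕ) : ℝ :=
  (∏ i ∈ Finset.range k, (x - i)) / (Nat.factorial k)

/-- Associated Laguerre polynomial `L_n^{(α)}(z)`, with the convention `L_n^{(α)} = 0` for `n < 0`. -/
def lagL (n : ℤ) (α : ℝ) : ℝ → ℝ := fun z =>
  if n < 0 then 0
  else ∑ k ∈ Finset.range (n.toNat + 1),
    (-1 : ℝ) ^ k * genBinom ((n : ℝ) + α) (n.toNat - k) * z ^ k / (Nat.factorial k)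

/-- Generalised Laguerre polynomial
`T_{m,n}^{(μ)}(z) = det[(d/dz)^{j+k} L_{m+n}^{(μ+1)}(z)]_{j,k=0}^{n-1}`
(with `T_{m,0}^{(μ)} = 1`, the empty determinant). -/
def genLag (m : ℤ) (n : ℕ) (μ : ℝ) : ℝ → ℝ := fun z =>
  Matrix.det (Matrix.of fun j k : Fin n =>
    iteratedDeriv ((j : ℕ) + (k : ℕ)) (lagL (m + n) (μ + 1)) z)

/-- Wronskian `Wr(f_1, …, f_r)(z) = det[(d/dz)^{j-1} f_k(z)]`. -/
def wronskian {r : ℕ} (f : Fin r → ℝ → ℝ) : ℝ → ℝ := fun z =>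
  Matrix.det (Matrix.of fun j k : Fin r => iteratedDeriv (j : ℕ) (f k) z)

/-- The constant `c_{m,n} = (-1)^{n(2m+1+n)/2} ∏_{j=1}^n (j-1)!/(m+j)!`. -/
def cmn (m n : ℕ) : ℝ :=
  (-1 : ℝ) ^ (n * (2 * m + 1 + n) / 2) *
    ∏ j ∈ Finset.range n, (Nat.factorial j : ℝ) / (Nat.factorial (m + j + 1))

/-- `τ_{m,n}^{(μ)}(z) = det[(z d/dz)^{j+k} L_{m+n}^{(n+μ)}(z)]_{j,k=0}^{n-1}`. -/
def tauP (m : ℤ) (n : ℕ) (μ : ℝ) : ℝ → ℝ := fun z =>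
  Matrix.det (Matrix.of fun j k : Fin n =>
    ((fun (g : ℝ → ℝ) => fun t => t * deriv g t)^[(j : ℕ) + (k : ℕ)]
      (lagL (m + n) ((n : ℝ) + μ))) z)

/-- Hirota bilinear operator `D_z(f • g) = f' g - f g'`. -/
def hirota (f g : ℝ → ℝ) (z : ℝ) : ℝ := deriv f z * g z - f z * deriv g z

/-- Probabilists' Hermite polynomial `He_n` as a real function. -/
def He (n : ℕ) : ℝ → ℝ := fun z => Polynomial.aeval z (Polynomial.hermite n)

/-- The fifth Painlevé equation (with `δ = -1/2`) for `w` with parameters `(a, b, c)`,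
holding at the point `z`. -/
def PV (a b c : ℝ) (w : ℝ → ℝ) (z : ℝ) : Prop :=
  iteratedDeriv 2 w z =
    (1 / (2 * w z) + 1 / (w z - 1)) * (deriv w z) ^ 2
      - (1 / z) * deriv w z
      + (w z - 1) ^ 2 * (a * (w z) ^ 2 + b) / (z ^ 2 * w z)
      + c * w z / z
      - w z * (w z + 1) / (2 * (w z - 1))

/-- The Jimbo–Miwa–Okamoto `σ`-equation `S_V` with parameters `(ν₁, ν₂, ν₃)`,
holding at the point `z`. -/
def SV (ν₁ ν₂ ν₃ : ℝ) (σ : ℝ → ℝ) (z : ℝ) : Prop :=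
  (z * iteratedDeriv 2 σ z) ^ 2 =
    (2 * (deriv σ z) ^ 2 + (ν₁ + ν₂ + ν₃ - z) * deriv σ z + σ z) ^ 2
      - 4 * deriv σ z * (deriv σ z + ν₁) * (deriv σ z + ν₂) * (deriv σ z + ν₃)

/-!
Write `θ = z d/dz`. The Hankel determinants of `h, θ h, θ² h, …` are the Hankel determinants of a
moment sequence whose measure evolves with `log z`, so consecutive ones satisfy the Toda equation,
and replacing `h` by `u = θ h - x h` is a Christoffel transformation of the measure at `x`. Both
facts are instances of the Desnanot–Jacobi identity. With `N = m + n` and `h = L_N^{(ν)}`, the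
contiguity relations of the Laguerre polynomials say that `L_{N-1}^{(ν)}` is, up to constants, the
transform of `h` at `x = N`, that `v ∝ L_N^{(ν-1)}` is the transform at `x = -ν`, that
`L_{N-1}^{(ν-1)}` is the transform at both points, and that `θ v = z u`.

Let `R` and `S` be the ratios `P_{n+1}(x) / P_n(x)` of monic orthogonal polynomials at `x = N` and
`x = -ν`. The Toda flow gives a Riccati equation for each, and `θ v = z u` expresses the two
recurrence coefficients through `R` and `S` (the Laguerre–Freud equations). The result is a
Hamiltonian system for `1 - S / R` and `R - S`, equivalent to the fifth Painlevé equation, and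
by the Christoffel–Darboux formula `1 - S / R` is the ratio of `τ` functions in question.

The argument divides by Hankel determinants, so it is run with `ν` an indeterminate. They do not
vanish there: for `ν > -1` the coefficients of `L_N^{(ν)}` alternate in sign, which makes the
Hankel matrices at `z = -1` positive definite. As a polynomial identity the equation then holds for
every `ν`.
-/

section DesnanotJacobi

open Matrix

variable {R S : Type*} [CommRing R] [CommRing S] {m : Type*} [Fintype m] [DecidableEq m]

/-- The minor of a block matrix obtained by bordering its upper left block with the row `p` and
the column `q` of the other block. -/
def borderedMinor (M : Matrix (m ⊕ Fin 2) (m ⊕ Fin 2) R) (p q : Fin 2) : R :=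
  (M.submatrix (Sum.elim Sum.inl fun _ : Fin 1 => Sum.inr p)
    (Sum.elim Sum.inl fun _ : Fin 1 => Sum.inr q)).det

theorem map_borderedMinor (f : R →+* S) (M : Matrix (m ⊕ Fin 2) (m ⊕ Fin 2) R) (p q : Fin 2) :
    f (borderedMinor M p q) = borderedMinor (M.map f) p q :=
  f.map_det _

theorem map_det_toBlocks₁₁ (f : R →+* S) (M : Matrix (m ⊕ Fin 2) (m ⊕ Fin 2) R) :
    f M.toBlocks₁₁.det = (M.map f).toBlocks₁₁.det :=
  f.map_det _

theorem borderedMinor_eq_det_mul_schur (M : Matrix (m ⊕ Fin 2) (m ⊕ Fin 2) R)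
    [Invertible M.toBlocks₁₁] (p q : Fin 2) :
    borderedMinor M p q = M.toBlocks₁₁.det *
      (M.toBlocks₂₂ - M.toBlocks₂₁ * ⅟M.toBlocks₁₁ * M.toBlocks₁₂) p q := by
  have hblocks : M.submatrix (Sum.elim Sum.inl fun _ : Fin 1 => Sum.inr p)
      (Sum.elim Sum.inl fun _ : Fin 1 => Sum.inr q) =
      fromBlocks M.toBlocks₁₁ (M.toBlocks₁₂.submatrix id fun _ => q)
        (M.toBlocks₂₁.submatrix (fun _ => p) id)
        (M.toBlocks₂₂.submatrix (fun _ => p) fun _ => q) := by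
    ext (i | i) (j | j) <;> rfl
  rw [borderedMinor, hblocks, det_fromBlocks₁₁, det_unique (n := Fin 1)]
  simp [Matrix.mul_apply]

theorem desnanot_jacobi_of_isUnit (M : Matrix (m ⊕ Fin 2) (m ⊕ Fin 2) R)
    (hM : IsUnit M.toBlocks₁₁.det) :
    M.det * M.toBlocks₁₁.det =
      borderedMinor M 0 0 * borderedMinor M 1 1 - borderedMinor M 0 1 * borderedMinor M 1 0 := by
  let := M.toBlocks₁₁.invertibleOfIsUnitDet hM
  have hdet : M.det = M.toBlocks₁₁.det *
      (M.toBlocks₂₂ - M.toBlocks₂₁ * ⅟M.toBlocks₁₁ * M.toBlocks₁₂).det := by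
    rw [← det_fromBlocks₁₁, fromBlocks_toBlocks]
  rw [hdet, det_fin_two]
  simp only [borderedMinor_eq_det_mul_schur]
  ring

theorem desnanot_jacobi_of_ne_zero [IsDomain R] (M : Matrix (m ⊕ Fin 2) (m ⊕ Fin 2) R)
    (hM : M.toBlocks₁₁.det ≠ 0) :
    M.det * M.toBlocks₁₁.det =
      borderedMinor M 0 0 * borderedMinor M 1 1 - borderedMinor M 0 1 * borderedMinor M 1 0 := by
  let f := algebraMap R (FractionRing R)
  have hf : Function.Injective f := IsFractionRing.injective R (FractionRing R)
  have hunit : IsUnit (M.map f).toBlocks₁₁.det := by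
    rw [← map_det_toBlocks₁₁]
    exact ((map_ne_zero_iff f hf).2 hM).isUnit
  apply hf
  rw [map_mul, map_det_toBlocks₁₁, RingHom.map_det, RingHom.mapMatrix_apply]
  simpa only [map_mul, map_sub, map_borderedMinor] using desnanot_jacobi_of_isUnit (M.map f) hunit

/- The identity is polynomial in the entries, so the generic matrix, whose blocks have nonzero
determinants, decides it. -/
theorem desnanot_jacobi (M : Matrix (m ⊕ Fin 2) (m ⊕ Fin 2) R) :
    M.det * M.toBlocks₁₁.det =
      borderedMinor M 0 0 * borderedMinor M 1 1 - borderedMinor M 0 1 * borderedMinor M 1 0 := by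
  let G := mvPolynomialX (m ⊕ Fin 2) (m ⊕ Fin 2) ℤ
  have hG : G.toBlocks₁₁.det ≠ 0 := fun h => by
    let f := MvPolynomial.eval fun ij : (m ⊕ Fin 2) × (m ⊕ Fin 2) => (1 : Matrix _ _ ℤ) ij.1 ij.2
    have hf : G.map f = 1 := mvPolynomialX_mapMatrix_eval 1
    have hone := map_det_toBlocks₁₁ f G
    rw [h, hf, ← fromBlocks_one, toBlocks_fromBlocks₁₁] at hone
    simp at hone
  let g := (MvPolynomial.aeval (R := ℤ) fun ij : (m ⊕ Fin 2) × (m ⊕ Fin 2) => M ij.1 ij.2).toRingHom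
  have hg : G.map g = M := mvPolynomialX_mapMatrix_aeval ℤ M
  have hspec := congrArg g (desnanot_jacobi_of_ne_zero G hG)
  rw [map_mul, map_det_toBlocks₁₁, RingHom.map_det] at hspec
  simp only [map_mul, map_sub, map_borderedMinor] at hspec
  rwa [RingHom.mapMatrix_apply, hg] at hspec

/-- The embedding of `Fin (n + 1)` into `Fin (n + 2)` whose range omits the last but one index. -/
def skipPenultimate (n : ℕ) : Fin (n + 1) → Fin (n + 2) :=
  (Fin.last n).castSucc.succAbove

theorem skipPenultimate_last (n : ℕ) : skipPenultimate n (Fin.last n) = Fin.last (n + 1) := by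
  simp [skipPenultimate]

theorem skipPenultimate_castSucc {n : ℕ} (i : Fin n) :
    skipPenultimate n i.castSucc = i.castSucc.castSucc := by
  simp [skipPenultimate, Fin.succAbove, Fin.lt_def]

theorem desnanot_jacobi_fin {n : ℕ} (M : Matrix (Fin (n + 2)) (Fin (n + 2)) R) :
    M.det * (M.submatrix (Fin.castAdd 2) (Fin.castAdd 2)).det =
      (M.submatrix Fin.castSucc Fin.castSucc).det *
        (M.submatrix (skipPenultimate n) (skipPenultimate n)).det -
      (M.submatrix Fin.castSucc (skipPenultimate n)).det *
        (M.submatrix (skipPenultimate n) Fin.castSucc).det := by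
  let e : Fin n ⊕ Fin 2 ≃ Fin (n + 2) := finSumFinEquiv
  have hborder (p q : Fin 2) (r s : Fin (n + 1) → Fin (n + 2))
      (hr : ∀ i : Fin n ⊕ Fin 1,
        r (finSumFinEquiv i) = e (Sum.elim Sum.inl (fun _ => Sum.inr p) i))
      (hs : ∀ i : Fin n ⊕ Fin 1,
        s (finSumFinEquiv i) = e (Sum.elim Sum.inl (fun _ => Sum.inr q) i)) :
      borderedMinor (M.submatrix e e) p q = (M.submatrix r s).det := by
    rw [borderedMinor, ← det_submatrix_equiv_self finSumFinEquiv (M.submatrix r s)]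
    congr 1
    ext i j
    simp only [submatrix_apply, hr, hs]
  have hinit (i : Fin n ⊕ Fin 1) :
      (finSumFinEquiv i).castSucc = e (Sum.elim Sum.inl (fun _ => Sum.inr 0) i) := by
    rcases i with i | i
    · rfl
    · rw [Subsingleton.elim i 0]; rfl
  have hskip (i : Fin n ⊕ Fin 1) :
      skipPenultimate n (finSumFinEquiv i) = e (Sum.elim Sum.inl (fun _ => Sum.inr 1) i) := by
    rcases i with i | i
    · exact skipPenultimate_castSucc i
    · rw [Subsingleton.elim i 0]; exact skipPenultimate_last n
  rw [← hborder 0 0 _ _ hinit hinit, ← hborder 1 1 _ _ hskip hskip, ← hborder 0 1 _ _ hinit hskip,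
    ← hborder 1 0 _ _ hskip hinit, ← desnanot_jacobi, det_submatrix_equiv_self]
  rfl

end DesnanotJacobi

section DerivationDet

open Matrix

variable {k B : Type*} [CommRing k] [CommRing B] [Algebra k B] (D : Derivation k B B)

theorem derivation_prod {ι : Type*} [DecidableEq ι] (s : Finset ι) (f : ι → B) :
    D (∏ i ∈ s, f i) = ∑ i ∈ s, ∏ j ∈ s, Function.update f i (D (f i)) j := by
  induction s using Finset.induction_on with
  | empty => simp
  | insert a s ha ih =>
    have hrest (i : ι) (hi : i ∈ s) : Function.update f i (D (f i)) a = f a :=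
      Function.update_of_ne (by rintro rfl; exact ha hi) _ _
    have hfirst : ∏ j ∈ s, Function.update f a (D (f a)) j = ∏ j ∈ s, f j :=
      Finset.prod_congr rfl fun j hj => Function.update_of_ne (by rintro rfl; exact ha hj) _ _
    simp only [Finset.prod_insert ha, Finset.sum_insert ha, Derivation.leibniz, ih, smul_eq_mul,
      Function.update_self, hfirst, Finset.mul_sum]
    rw [add_comm, mul_comm (∏ j ∈ s, f j)]
    exact congrArg _ (Finset.sum_congr rfl fun i hi => by rw [hrest i hi])

theorem derivation_det {ι : Type*} [DecidableEq ι] [Fintype ι] (M : Matrix ι ι B) :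
    D M.det = ∑ i, (M.updateCol i fun j => D (M j i)).det := by
  simp only [det_apply', map_sum]
  rw [Finset.sum_comm]
  refine Finset.sum_congr rfl fun σ _ => ?_
  rw [Derivation.leibniz, Derivation.map_intCast, smul_zero, add_zero, derivation_prod,
    smul_eq_mul, Finset.mul_sum]
  refine Finset.sum_congr rfl fun i _ => congrArg _ (Finset.prod_congr rfl fun j _ => ?_)
  obtain rfl | hij := eq_or_ne j i
  · simp
  · simp [hij]

/- Differentiating any column but the last makes it equal to its right neighbour, so only the last
summand of `derivation_det` survives. -/
theorem derivation_det_of_derivation_col {n : ℕ} (M : Matrix (Fin (n + 1)) (Fin (n + 2)) B)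
    (hM : ∀ i j, D (M i (Fin.castSucc j)) = M i j.succ) :
    D (M.submatrix id Fin.castSucc).det = (M.submatrix id (skipPenultimate n)).det := by
  rw [derivation_det, Finset.sum_eq_single (Fin.last n)]
  · congr 1
    ext i j
    induction j using Fin.lastCases with
    | last => simp [hM, skipPenultimate_last]
    | cast j => simp [skipPenultimate_castSucc, (Fin.castSucc_lt_last j).ne]
  · intro j _ hj
    obtain ⟨j, rfl⟩ := Fin.exists_castSucc_eq.2 hj
    refine det_zero_of_column_eq j.castSucc_lt_succ.ne fun i => ?_
    simp [hM, j.castSucc_lt_succ.ne']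
  · simp

end DerivationDet

section HankelDet

open Matrix

variable {k B : Type*} [CommRing k] [CommRing B] [Algebra k B] (D : Derivation k B B)

/-- The Hankel determinant of the sequence `h`, `D h`, `D (D h)`, … of iterated derivatives. -/
def hankelDet (n : ℕ) (h : B) : B :=
  (Matrix.of fun i j : Fin n => D^[i + j] h).det

theorem hankelDet_zero (h : B) : hankelDet D 0 h = 1 :=
  det_isEmpty

theorem hankelDet_one (h : B) : hankelDet D 1 h = h := by
  simp [hankelDet]

theorem derivation_hankelDet (n : ℕ) (h : B) :
    D (hankelDet D (n + 1) h) =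
      (Matrix.of fun i j : Fin (n + 1) => D^[i + skipPenultimate n j] h).det :=
  derivation_det_of_derivation_col D (Matrix.of fun i j => D^[i + j] h) fun _ _ =>
    (Function.iterate_succ_apply' _ _ _).symm

theorem hankelDet_toda (n : ℕ) (h : B) :
    hankelDet D (n + 2) h * hankelDet D n h =
      hankelDet D (n + 1) h * D (D (hankelDet D (n + 1) h)) - D (hankelDet D (n + 1) h) ^ 2 := by
  have hrow : (Matrix.of fun i j : Fin (n + 1) => D^[skipPenultimate n i + j] h).det =
      D (hankelDet D (n + 1) h) := by
    rw [derivation_hankelDet, ← det_transpose]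
    simp only [transpose, of_apply, add_comm]
  have hboth : (Matrix.of fun i j : Fin (n + 1) =>
      D^[skipPenultimate n i + skipPenultimate n j] h).det = D (D (hankelDet D (n + 1) h)) := by
    rw [← hrow]
    exact (derivation_det_of_derivation_col D (Matrix.of fun i j => D^[skipPenultimate n i + j] h)
      fun _ _ => (Function.iterate_succ_apply' _ _ _).symm).symm
  have hdj : hankelDet D (n + 2) h * hankelDet D n h = hankelDet D (n + 1) h *
      (Matrix.of fun i j => D^[skipPenultimate n i + skipPenultimate n j] h).det -
      (Matrix.of fun i j : Fin (n + 1) => D^[i + skipPenultimate n j] h).det *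
        (Matrix.of fun i j : Fin (n + 1) => D^[skipPenultimate n i + j] h).det :=
    desnanot_jacobi_fin (Matrix.of fun i j => D^[i + j] h)
  rw [hdj, hboth, hrow, ← derivation_hankelDet, sq]

theorem det_snoc_sub_smul {n : ℕ} (A : Matrix (Fin (n + 1)) (Fin (n + 1)) B) (x : B) :
    (Matrix.of (Fin.snoc (fun i : Fin n => A i.succ - x • A i.castSucc) (A 0))).det =
      (-1) ^ n * A.det := by
  rw [det_eq_of_forall_row_eq_smul_add_pred (A := A) (B := Matrix.of
    (Fin.cons (A 0) fun i : Fin n => A i.succ - x • A i.castSucc)) (fun _ => x) (by simp) (by simp)]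
  have hperm := det_permute (finRotate (n + 1)) (Matrix.of
    (Fin.cons (A 0) fun i : Fin n => A i.succ - x • A i.castSucc))
  simp only [sign_finRotate, Nat.add_sub_cancel, Units.val_pow_eq_pow_val, Units.val_neg,
    Units.val_one, Int.cast_pow, Int.cast_neg, Int.cast_one] at hperm
  rw [← hperm, Fin.snoc_eq_cons_rotate]
  rfl

variable {D} in
theorem iterate_derivation_sub_mul {h u x : B} (hx : D x = 0) (hu : u = D h - x * h) (i : ℕ) :
    D^[i] u = D^[i + 1] h - x * D^[i] h := by
  induction i with
  | zero => simpa using hu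
  | succ i ih =>
    rw [Function.iterate_succ_apply', ih, map_sub, Derivation.leibniz, hx, smul_zero, add_zero,
      smul_eq_mul, ← Function.iterate_succ_apply' D, ← Function.iterate_succ_apply' D]

variable {D} in
theorem det_snoc_iterate_derivation {h u x : B} (hx : D x = 0) (hu : u = D h - x * h) {n : ℕ}
    (c : Fin (n + 1) → ℕ) :
    (Matrix.of (Fin.snoc (fun (i : Fin n) j => D^[i + c j] u) fun j => D^[c j] h)).det =
      (-1) ^ n * (Matrix.of fun i j : Fin (n + 1) => D^[i + c j] h).det := by
  have hrow (i : Fin n) (j : Fin (n + 1)) :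
      D^[i + c j] u = D^[i.succ + c j] h - x * D^[i.castSucc + c j] h := by
    rw [iterate_derivation_sub_mul hx hu, Fin.val_succ, add_right_comm, Fin.val_castSucc]
  have hzero (j : Fin (n + 1)) : D^[c j] h = D^[(0 : Fin (n + 1)) + c j] h := by
    rw [Fin.val_zero, zero_add]
  simp only [hrow, hzero]
  exact det_snoc_sub_smul (Matrix.of fun i j => D^[i + c j] h) x

variable {D} in
theorem hankelDet_christoffel {h u x : B} (hx : D x = 0) (hu : u = D h - x * h) (n : ℕ) :
    hankelDet D (n + 2) h * hankelDet D n u =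
      D (hankelDet D (n + 1) u) * hankelDet D (n + 1) h -
        hankelDet D (n + 1) u * D (hankelDet D (n + 1) h) := by
  let G : Matrix (Fin (n + 2)) (Fin (n + 2)) B :=
    Matrix.of (Fin.snoc (fun (i : Fin (n + 1)) j => D^[i + j] u) fun j => D^[j] h)
  have hrow (i : Fin (n + 1)) (j : Fin (n + 2)) : G i.castSucc j = D^[i + j] u := by simp [G]
  have hskip (c : Fin (n + 1) → Fin (n + 2)) : (G.submatrix (skipPenultimate n) c).det =
      (-1) ^ n * (Matrix.of fun i j : Fin (n + 1) => D^[i + c j] h).det := by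
    rw [← det_snoc_iterate_derivation hx hu]
    congr 1
    ext i j
    induction i using Fin.lastCases with
    | last => simp [skipPenultimate_last, G]
    | cast i => simp [skipPenultimate_castSucc, hrow]
  have hG : G.det = (-1) ^ (n + 1) * hankelDet D (n + 2) h :=
    det_snoc_iterate_derivation hx hu Fin.val
  have hu₀ : (G.submatrix (Fin.castAdd 2) (Fin.castAdd 2)).det = hankelDet D n u :=
    congrArg Matrix.det (Matrix.ext fun i j => hrow i.castSucc _)
  have hu₁ : (G.submatrix Fin.castSucc Fin.castSucc).det = hankelDet D (n + 1) u :=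
    congrArg Matrix.det (Matrix.ext fun i j => hrow i _)
  have hDu : (G.submatrix Fin.castSucc (skipPenultimate n)).det = D (hankelDet D (n + 1) u) := by
    rw [derivation_hankelDet]
    exact congrArg Matrix.det (Matrix.ext fun i j => hrow i _)
  have hh : (G.submatrix (skipPenultimate n) Fin.castSucc).det = (-1) ^ n * hankelDet D (n + 1) h :=
    hskip _
  have hDh : (G.submatrix (skipPenultimate n) (skipPenultimate n)).det =
      (-1) ^ n * D (hankelDet D (n + 1) h) := by
    rw [derivation_hankelDet, hskip]
  have hdj := desnanot_jacobi_fin G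
  rw [hG, hu₀, hu₁, hDu, hh, hDh, pow_succ] at hdj
  obtain hsign | hsign := neg_one_pow_eq_or B n <;> rw [hsign] at hdj
  · linear_combination -hdj
  · linear_combination hdj

end HankelDet

section HankelDetGauge

open Matrix

variable {k B : Type*} [CommRing k] [CommRing B] [Algebra k B]

theorem add_algebraMap_pow_apply (T : Module.End k B) (c : k) (h : B) {n : ℕ} (i : Fin n) :
    ((T + algebraMap k _ c) ^ (i : ℕ)) h =
      ∑ p : Fin n, (c ^ (i - p : ℕ) * (i : ℕ).choose p) • (T ^ (p : ℕ)) h := by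
  have hcomm : Commute T (algebraMap k _ c) := (Algebra.commutes c T).symm
  have hterm (p : ℕ) :
      (T ^ p * algebraMap k _ c ^ (i - p : ℕ) * ((i : ℕ).choose p : Module.End k B)) h =
        (c ^ (i - p : ℕ) * ((i : ℕ).choose p : k)) • (T ^ p) h := by
    rw [← map_natCast (algebraMap k (Module.End k B)), ← map_pow, mul_assoc, ← map_mul,
      Module.End.mul_apply, Module.algebraMap_end_apply, map_smul]
  rw [hcomm.add_pow, LinearMap.sum_apply,
    Fin.sum_univ_eq_sum_range fun p => (c ^ (i - p : ℕ) * ((i : ℕ).choose p : k)) • (T ^ p) h]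
  simp only [hterm]
  refine Finset.sum_subset (Finset.range_subset_range.2 i.2) fun p _ hp => ?_
  rw [Nat.choose_eq_zero_of_lt (by simpa using hp), Nat.cast_zero, mul_zero, zero_smul]

theorem det_add_algebraMap_pow (T : Module.End k B) (c : k) (n : ℕ) (h : B) :
    (Matrix.of fun i j : Fin n => ((T + algebraMap k _ c) ^ (i + j : ℕ)) h).det =
      (Matrix.of fun i j : Fin n => (T ^ (i + j : ℕ)) h).det := by
  let P : Matrix (Fin n) (Fin n) B :=
    Matrix.of fun i p => algebraMap k B (c ^ (i - p : ℕ) * (i : ℕ).choose p)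
  have hP : P.det = 1 := by
    rw [det_of_isLowerTriangular P fun i p (hip : i < p) => by
      simp [P, Nat.choose_eq_zero_of_lt hip]]
    simp [P]
  have hfactor : (Matrix.of fun i j : Fin n => ((T + algebraMap k _ c) ^ (i + j : ℕ)) h) =
      P * (Matrix.of fun i j : Fin n => (T ^ (i + j : ℕ)) h) * Pᵀ := by
    ext i j
    simp only [of_apply, mul_apply, transpose_apply, Finset.sum_mul, P]
    rw [pow_add, Module.End.mul_apply, add_algebraMap_pow_apply T c h j, map_sum]
    refine Finset.sum_congr rfl fun q _ => ?_
    rw [map_smul, add_algebraMap_pow_apply, Finset.smul_sum]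
    refine Finset.sum_congr rfl fun p _ => ?_
    rw [← Module.End.mul_apply, ← pow_add]
    simp only [Algebra.smul_def]
    ring
  rw [hfactor, det_mul, det_mul, det_transpose, hP, one_mul, mul_one]

theorem hankelDet_mul_of_derivation_eq_smul (D : Derivation k B B) {a : B} {c : k}
    (ha : D a = c • a) (n : ℕ) (h : B) :
    hankelDet D n (a * h) = a ^ n * hankelDet D n h := by
  let T : Module.End k B := D
  have hiter (i : ℕ) : D^[i] (a * h) = a * ((T + algebraMap k _ c) ^ i) h := by
    induction i with
    | zero => simp
    | succ i ih =>
      rw [Function.iterate_succ_apply', ih, Derivation.leibniz, ha, pow_succ']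
      simp only [T, smul_eq_mul, Algebra.smul_def, Module.End.mul_apply, LinearMap.add_apply,
        Module.algebraMap_end_apply, Derivation.coeFn_coe]
      ring
  have hpow (i : ℕ) : D^[i] h = (T ^ i) h := (Module.End.pow_apply T i h).symm
  simp only [hankelDet, hiter, hpow]
  rw [← det_add_algebraMap_pow T c n h]
  exact (det_smul (Matrix.of fun i j : Fin n => ((T + algebraMap k _ c) ^ (i + j : ℕ)) h) a).trans
    (by rw [Fintype.card_fin])

theorem map_hankelDet {l C F : Type*} [CommRing l] [CommRing C] [Algebra l C] [FunLike F B C]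
    [RingHomClass F B C] {D : Derivation k B B} {E : Derivation l C C} {f : F}
    (hf : ∀ b, f (D b) = E (f b)) (n : ℕ) (h : B) : f (hankelDet D n h) = hankelDet E n (f h) := by
  have hiter (i : ℕ) : f (D^[i] h) = E^[i] (f h) := Function.Semiconj.iterate_right hf i h
  simp only [hankelDet, ← hiter]
  exact RingHom.map_det (f : B →+* C) _

end HankelDetGauge

section ChristoffelPairs

variable {k B : Type*} [CommRing k] [CommRing B] [Algebra k B] [IsDomain B] {D : Derivation k B B}

theorem hankelDet_christoffel_dual {h u x : B} (hx : D x = 0) (hu : u = D h - x * h) {n : ℕ}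
    (hM : ∀ i ≤ n, hankelDet D i h ≠ 0) (hU : ∀ i < n, hankelDet D i u ≠ 0) :
    D (hankelDet D n u) * hankelDet D (n + 1) h - hankelDet D n u * D (hankelDet D (n + 1) h) +
      x * hankelDet D n u * hankelDet D (n + 1) h + hankelDet D (n + 1) u * hankelDet D n h =
        0 := by
  induction n with
  | zero =>
    simp only [hankelDet_zero, hankelDet_one, zero_add, Derivation.map_one_eq_zero, hu]
    ring
  | succ n ih =>
    have hprev := ih (fun i hi => hM i (hi.trans n.le_succ))
      fun i hi => hU i (hi.trans n.lt_succ_self)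
    have hchr := hankelDet_christoffel hx hu n
    have hchr' := congrArg D hchr
    simp only [map_sub, Derivation.leibniz, smul_eq_mul] at hchr'
    have htodaM := hankelDet_toda D n h
    have htodaU := hankelDet_toda D n u
    refine (mul_eq_zero.1 ?_).resolve_left
      (mul_ne_zero (hU n n.lt_succ_self) (hM (n + 1) le_rfl))
    linear_combination
      (hankelDet D (n + 1) u * hankelDet D (n + 2) h) * hprev -
      (hankelDet D (n + 1) u * hankelDet D (n + 1) h) * hchr' +
      hankelDet D (n + 1) h ^ 2 * htodaU - hankelDet D (n + 1) u ^ 2 * htodaM +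
      (D (hankelDet D (n + 1) u) * hankelDet D (n + 1) h +
        hankelDet D (n + 1) u * D (hankelDet D (n + 1) h)) * hchr

theorem hankelDet_christoffel_darboux {h u v w x y : B} (hx : D x = 0) (hy : D y = 0)
    (hu : u = D h - x * h) (hv : v = D h - y * h) (hw : w = D v - x * v) {n : ℕ}
    (hM : ∀ i ≤ n, hankelDet D i h ≠ 0) (hW : ∀ i < n, hankelDet D i w ≠ 0) :
    hankelDet D (n + 1) v * hankelDet D n u - hankelDet D (n + 1) u * hankelDet D n v =
      (x - y) * hankelDet D n w * hankelDet D (n + 1) h := by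
  have hw' : w = D u - y * u := by
    simp only [hw, hu, hv, map_sub, Derivation.leibniz, hx, hy, smul_eq_mul]
    ring
  induction n with
  | zero =>
    simp only [hankelDet_zero, hankelDet_one, zero_add, hu, hv]
    ring
  | succ n ih =>
    have hprev := ih (fun i hi => hM i (hi.trans n.le_succ))
      fun i hi => hW i (hi.trans n.lt_succ_self)
    have hwronskian : D (hankelDet D (n + 1) u) * hankelDet D (n + 1) v -
        hankelDet D (n + 1) u * D (hankelDet D (n + 1) v) =
          (x - y) * hankelDet D n w * hankelDet D (n + 2) h := by
      apply mul_left_cancel₀ (hM (n + 1) le_rfl)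
      linear_combination hankelDet D (n + 1) u * hankelDet_christoffel hy hv n -
        hankelDet D (n + 1) v * hankelDet_christoffel hx hu n + hankelDet D (n + 2) h * hprev
    apply mul_left_cancel₀ (hW n n.lt_succ_self)
    linear_combination hankelDet D (n + 1) u * hankelDet_christoffel hx hw n -
      hankelDet D (n + 1) v * hankelDet_christoffel hy hw' n +
      hankelDet D (n + 1) w * hwronskian

end ChristoffelPairs

section PainleveForm

variable {k B : Type*} [CommRing k] [CommRing B] [Algebra k B]

/-- The difference of the two sides of the fifth Painlevé equation with parameters
`(a ^ 2 / 2, -κ ^ 2 / 2, γ)`, evaluated at `f / g` and multiplied by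
`2 * z ^ 2 * f * (f - g) * g ^ 3`. It is homogeneous of degree five in `(f, g)`, and the derivation
`D` plays the role of `z * d/dz`. -/
def painleveForm (D : Derivation k B B) (a κ γ z f g : B) : B :=
  2 * f * (f - g) * (D (D f * g - f * D g) * g - 2 * (D f * g - f * D g) * D g) -
    ((3 * f - g) * (D f * g - f * D g) ^ 2 + (f - g) ^ 3 * (a ^ 2 * f ^ 2 - κ ^ 2 * g ^ 2) +
      2 * γ * z * f ^ 2 * (f - g) * g ^ 2 - z ^ 2 * f ^ 2 * (f + g) * g ^ 2)

theorem map_painleveForm {l C F : Type*} [CommRing l] [CommRing C] [Algebra l C] [FunLike F B C]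
    [RingHomClass F B C] {D : Derivation k B B} {E : Derivation l C C} {φ : F}
    (hφ : ∀ b, φ (D b) = E (φ b)) (a κ γ z f g : B) :
    φ (painleveForm D a κ γ z f g) = painleveForm E (φ a) (φ κ) (φ γ) (φ z) (φ f) (φ g) := by
  simp only [painleveForm, map_sub, map_add, map_mul, map_pow, map_ofNat, hφ]

theorem painleveForm_mul_mul (D : Derivation k B B) (a κ γ z c f g : B) :
    painleveForm D a κ γ z (c * f) (c * g) = c ^ 5 * painleveForm D a κ γ z f g := by
  simp only [painleveForm, Derivation.leibniz, map_sub, map_add, smul_eq_mul]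
  ring

/- The two first order equations are the Hamiltonian form of the fifth Painlevé equation, with `p`
the momentum times `w`. -/
theorem painleveForm_eq_zero_of_hamiltonian {D : Derivation k B B} {a κ γ z w p : B}
    (ha : D a = 0) (hκ : D κ = 0) (hz : D z = z)
    (hw : D w = -z * w - (1 - w) * (2 * p - κ - a * w))
    (hp : 2 * w * (1 - w) * D p =
      2 * (1 - w) ^ 2 * p * (κ - p) + z * w ^ 2 * (2 * p - (κ + a + γ + 1))) :
    painleveForm D a κ γ z w 1 = 0 := by
  have hD2 : D (2 : B) = 0 := by exact_mod_cast D.map_natCast 2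
  have hww : D (D w) = -z * w - z * D w + D w * (2 * p - κ - a * w) -
      (1 - w) * (2 * D p - a * D w) := by
    rw [hw]
    simp only [map_sub, map_neg, Derivation.leibniz, Derivation.map_one_eq_zero, ha, hκ, hz, hD2,
      smul_eq_mul, hw]
    ring
  simp only [painleveForm, Derivation.map_one_eq_zero, mul_one, mul_zero, sub_zero]
  rw [hww, hw]
  linear_combination 2 * (1 - w) * hp

end PainleveForm

section Ratios

variable {k K : Type*} [CommRing k] [Field K] [Algebra k K] (D : Derivation k K K)

/-- The diagonal recurrence coefficient `aₙ` of the monic orthogonal polynomials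
`X Pₙ = Pₙ₊₁ + aₙ Pₙ + bₙ₋₁ Pₙ₋₁` whose moments are the iterated derivatives of `h`. -/
def recurrenceDiag (n : ℕ) (h : K) : K :=
  D (hankelDet D (n + 1) h) / hankelDet D (n + 1) h - D (hankelDet D n h) / hankelDet D n h

/-- The off-diagonal recurrence coefficient `bₙ` of the monic orthogonal polynomials
`X Pₙ₊₁ = Pₙ₊₂ + aₙ₊₁ Pₙ₊₁ + bₙ Pₙ` whose moments are the iterated derivatives of `h`. -/
def recurrenceOffDiag (n : ℕ) (h : K) : K :=
  hankelDet D (n + 2) h * hankelDet D n h / hankelDet D (n + 1) h ^ 2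

/-- The ratio `Pₙ₊₁(x) / Pₙ(x)` of values of consecutive monic orthogonal polynomials whose moments
are the iterated derivatives of `h`, in terms of the Christoffel transform `u = D h - x h`. -/
def orthogonalRatio (n : ℕ) (h u : K) : K :=
  -(hankelDet D (n + 1) u * hankelDet D n h) / (hankelDet D (n + 1) h * hankelDet D n u)

variable {D} {h u x : K} (hx : D x = 0) (hu : u = D h - x * h) {n : ℕ}
  (hM : ∀ i ≤ n + 1, hankelDet D i h ≠ 0) (hU : ∀ i ≤ n + 1, hankelDet D i u ≠ 0)
include hM hU

theorem orthogonalRatio_ne_zero : orthogonalRatio D n h u ≠ 0 :=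
  div_ne_zero (neg_ne_zero.2 (mul_ne_zero (hU _ le_rfl) (hM _ n.le_succ)))
    (mul_ne_zero (hM _ le_rfl) (hU _ n.le_succ))

include hx hu

theorem logDeriv_hankelDet_christoffel_succ :
    D (hankelDet D (n + 1) u) / hankelDet D (n + 1) u =
      D (hankelDet D (n + 1) h) / hankelDet D (n + 1) h -
        recurrenceOffDiag D n h / orthogonalRatio D n h u := by
  have hM₀ := hM n n.le_succ
  have hM₁ := hM (n + 1) le_rfl
  have hU₁ := hU (n + 1) le_rfl
  rw [recurrenceOffDiag, orthogonalRatio]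
  field_simp
  linear_combination -hankelDet_christoffel hx hu n

theorem logDeriv_hankelDet_christoffel :
    D (hankelDet D n u) / hankelDet D n u =
      D (hankelDet D n h) / hankelDet D n h + orthogonalRatio D n h u - x +
        recurrenceDiag D n h := by
  have hM₀ := hM n n.le_succ
  have hM₁ := hM (n + 1) le_rfl
  have hU₀ := hU n n.le_succ
  rw [recurrenceDiag, orthogonalRatio]
  field_simp
  have hdual := hankelDet_christoffel_dual hx hu (fun i hi => hM i (hi.trans n.le_succ))
    fun i hi => hU i (hi.le.trans n.le_succ)
  linear_combination hankelDet D n h * hdual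

theorem derivation_orthogonalRatio :
    D (orthogonalRatio D n h u) = (x - recurrenceDiag D n h) * orthogonalRatio D n h u -
      recurrenceOffDiag D n h - orthogonalRatio D n h u ^ 2 := by
  have hR := orthogonalRatio_ne_zero hM hU
  have hM₀ := hM n n.le_succ
  have hM₁ := hM (n + 1) le_rfl
  have hU₀ := hU n n.le_succ
  have hU₁ := hU (n + 1) le_rfl
  have hlog : D (orthogonalRatio D n h u) / orthogonalRatio D n h u =
      D (hankelDet D (n + 1) u) / hankelDet D (n + 1) u + D (hankelDet D n h) / hankelDet D n h -
        D (hankelDet D (n + 1) h) / hankelDet D (n + 1) h -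
          D (hankelDet D n u) / hankelDet D n u := by
    rw [orthogonalRatio, Derivation.leibniz_div]
    simp only [map_neg, Derivation.leibniz, smul_eq_mul]
    field_simp
    ring
  rw [logDeriv_hankelDet_christoffel_succ hx hu hM hU,
    logDeriv_hankelDet_christoffel hx hu hM hU, div_eq_iff hR] at hlog
  rw [hlog]
  field_simp
  ring

end Ratios

section GaugedPair

variable {k B : Type*} [CommRing k] [CommRing B] [Algebra k B] {D : Derivation k B B}

theorem derivation_pow_of_derivation_eq_self {z : B} (hz : D z = z) (n : ℕ) :
    D (z ^ n) = n * z ^ n := by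
  induction n with
  | zero => simp
  | succ n ih =>
    rw [pow_succ, Derivation.leibniz, ih, hz, Nat.cast_add_one, smul_eq_mul, smul_eq_mul]
    ring

theorem hankelDet_mul_of_derivation_eq_self {z : B} (hz : D z = z) (n : ℕ) (h : B) :
    hankelDet D n (z * h) = z ^ n * hankelDet D n h :=
  hankelDet_mul_of_derivation_eq_smul D (c := (1 : k)) (by rw [hz, one_smul]) n h

variable [IsDomain B] {u v z : B} (hz : D z = z) (hz₀ : z ≠ 0) (hv : D v = z * u)
include hz hz₀ hv

theorem hankelDet_christoffel_gauged (n : ℕ) :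
    hankelDet D (n + 2) v * hankelDet D n u =
      z * ((n + 1) * hankelDet D (n + 1) u * hankelDet D (n + 1) v +
        D (hankelDet D (n + 1) u) * hankelDet D (n + 1) v -
          hankelDet D (n + 1) u * D (hankelDet D (n + 1) v)) := by
  have hchr := hankelDet_christoffel (h := v) (u := z * u) D.map_zero (by simp [hv]) n
  simp only [hankelDet_mul_of_derivation_eq_self hz, Derivation.leibniz, smul_eq_mul,
    derivation_pow_of_derivation_eq_self hz, Nat.cast_add_one] at hchr
  apply mul_left_cancel₀ (pow_ne_zero n hz₀)
  linear_combination hchr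

theorem hankelDet_christoffel_dual_gauged {n : ℕ} (hV : ∀ i ≤ n, hankelDet D i v ≠ 0)
    (hU : ∀ i < n, hankelDet D i u ≠ 0) :
    n * hankelDet D n u * hankelDet D (n + 1) v + D (hankelDet D n u) * hankelDet D (n + 1) v -
      hankelDet D n u * D (hankelDet D (n + 1) v) + z * hankelDet D (n + 1) u * hankelDet D n v =
        0 := by
  have hdual := hankelDet_christoffel_dual (h := v) (u := z * u) D.map_zero (by simp [hv]) hV
    fun i hi => by
      rw [hankelDet_mul_of_derivation_eq_self hz]
      exact mul_ne_zero (pow_ne_zero i hz₀) (hU i hi)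
  simp only [hankelDet_mul_of_derivation_eq_self hz, Derivation.leibniz, smul_eq_mul,
    derivation_pow_of_derivation_eq_self hz] at hdual
  apply mul_left_cancel₀ (pow_ne_zero n hz₀)
  linear_combination hdual

theorem hankelDet_gauged_wronskian {h x : B} (hx : D x = 0) (hu : u = D h - x * h) (n : ℕ) :
    hankelDet D (n + 1) v *
        (D (hankelDet D n u) * hankelDet D n h - hankelDet D n u * D (hankelDet D n h)) =
      z * hankelDet D (n + 1) h * (n * hankelDet D n u * hankelDet D n v +
        D (hankelDet D n u) * hankelDet D n v - hankelDet D n u * D (hankelDet D n v)) := by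
  cases n with
  | zero => simp [hankelDet_zero]
  | succ n =>
    rw [← hankelDet_christoffel hx hu, Nat.cast_add_one]
    linear_combination hankelDet D (n + 2) h * hankelDet_christoffel_gauged hz hz₀ hv n

end GaugedPair

section LaguerreFreud

variable {k K : Type*} [CommRing k] [Field K] [Algebra k K] {D : Derivation k K K}
  {h u v z N ν : K} (hz : D z = z) (hz₀ : z ≠ 0) (hN : D N = 0) (hν : D ν = 0)
  (hu : u = D h - N * h) (hv : v = D h + ν * h) (hvu : D v = z * u) {n : ℕ}
  (hM : ∀ i ≤ n + 1, hankelDet D i h ≠ 0) (hU : ∀ i ≤ n + 1, hankelDet D i u ≠ 0)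
  (hV : ∀ i ≤ n + 1, hankelDet D i v ≠ 0)
include hz hz₀ hN hν hu hv hvu hM hU hV

theorem laguerreFreud_offDiag :
    recurrenceOffDiag D n h = orthogonalRatio D n h v * (N - n - orthogonalRatio D n h u) -
      z * orthogonalRatio D n h u := by
  have hdual := hankelDet_christoffel_dual_gauged hz hz₀ hvu (fun i hi => hV i (hi.trans n.le_succ))
    fun i hi => hU i (hi.le.trans n.le_succ)
  have hlogU := logDeriv_hankelDet_christoffel hN hu hM hU
  have hlogV := logDeriv_hankelDet_christoffel_succ (x := -ν) (by simp [hν]) (by rw [hv]; ring)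
    hM hV
  have hS := orthogonalRatio_ne_zero hM hV
  have hratio :
      hankelDet D (n + 1) u * hankelDet D n v / (hankelDet D n u * hankelDet D (n + 1) v) =
        orthogonalRatio D n h u / orthogonalRatio D n h v := by
    have hM₀ := hM n n.le_succ
    have hM₁ := hM (n + 1) le_rfl
    simp only [orthogonalRatio]
    have hU₀ := hU n n.le_succ
    have hV₀ := hV n n.le_succ
    have hV₁ := hV (n + 1) le_rfl
    field_simp
  have hbalance : n + D (hankelDet D n u) / hankelDet D n u -
      D (hankelDet D (n + 1) v) / hankelDet D (n + 1) v +
        z * (orthogonalRatio D n h u / orthogonalRatio D n h v) = 0 := by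
    have hU₀ := hU n n.le_succ
    have hV₁ := hV (n + 1) le_rfl
    rw [← hratio]
    field_simp
    linear_combination hdual
  rw [hlogU, hlogV, recurrenceDiag] at hbalance
  field_simp at hbalance
  linear_combination hbalance

theorem laguerreFreud_diag :
    recurrenceDiag D n h * orthogonalRatio D n h v = z * (orthogonalRatio D n h v + ν - n) +
      (orthogonalRatio D n h v + z) * (N - orthogonalRatio D n h u) := by
  have hM₀ := hM n n.le_succ
  have hM₁ := hM (n + 1) le_rfl
  have hU₀ := hU n n.le_succ
  have hV₀ := hV n n.le_succ
  have hlogU := logDeriv_hankelDet_christoffel hN hu hM hU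
  have hlogV := logDeriv_hankelDet_christoffel (x := -ν) (by simp [hν]) (by rw [hv]; ring) hM hV
  have hwronskian : -orthogonalRatio D n h v * (D (hankelDet D n u) / hankelDet D n u -
      D (hankelDet D n h) / hankelDet D n h) = z * (n + D (hankelDet D n u) / hankelDet D n u -
        D (hankelDet D n v) / hankelDet D n v) := by
    rw [orthogonalRatio]
    field_simp
    linear_combination hankelDet_gauged_wronskian hz hz₀ hvu hN hu n
  rw [hlogU, hlogV] at hwronskian
  linear_combination -hwronskian

theorem painleveForm_orthogonalRatio_eq_zero :
    painleveForm D (N - n) (N + ν) (ν - 1 - n) z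
      (1 - orthogonalRatio D n h v / orthogonalRatio D n h u) 1 = 0 := by
  have hR := orthogonalRatio_ne_zero hM hU
  have hS := orthogonalRatio_ne_zero hM hV
  have hDR := derivation_orthogonalRatio hN hu hM hU
  have hDS := derivation_orthogonalRatio (x := -ν) (by simp [hν]) (by rw [hv]; ring) hM hV
  have hb := laguerreFreud_offDiag hz hz₀ hN hν hu hv hvu hM hU hV
  have ha := laguerreFreud_diag hz hz₀ hN hν hu hv hvu hM hU hV
  set R := orthogonalRatio D n h u
  set S := orthogonalRatio D n h v
  refine painleveForm_eq_zero_of_hamiltonian (p := R - S) (by simp [hN]) (by simp [hN, hν]) hz ?_ ?_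
  · rw [map_sub, Derivation.map_one_eq_zero, Derivation.leibniz_div, hDR, hDS, hb]
    simp only [smul_eq_mul]
    field_simp
    ring
  · have ha' := eq_div_of_mul_eq hS ha
    rw [map_sub, hDR, hDS, ha']
    field_simp
    ring

end LaguerreFreud

section HankelSolution

variable {k : Type*} [CommRing k] {n : ℕ}

/- By the Christoffel–Darboux formula the two Hankel expressions have the quotient
`1 - orthogonalRatio D n h v / orthogonalRatio D n h u`. -/
theorem painleveForm_hankelDet_of_field {K : Type*} [Field K] [Algebra k K] {D : Derivation k K K}
    {h u v w z N ν : K} (hz : D z = z) (hz₀ : z ≠ 0) (hN : D N = 0) (hν : D ν = 0)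
    (hu : u = D h - N * h) (hv : v = D h + ν * h) (hw : w = D v - N * v) (hvu : D v = z * u)
    (hM : ∀ i ≤ n + 1, hankelDet D i h ≠ 0) (hU : ∀ i ≤ n + 1, hankelDet D i u ≠ 0)
    (hV : ∀ i ≤ n + 1, hankelDet D i v ≠ 0) (hW : ∀ i < n, hankelDet D i w ≠ 0) :
    painleveForm D (N - n) (N + ν) (ν - 1 - n) z
      (-(N + ν) * (hankelDet D n w * hankelDet D (n + 1) h))
      (hankelDet D n v * hankelDet D (n + 1) u) = 0 := by
  have hdarboux := hankelDet_christoffel_darboux (y := -ν) hN (by simp [hν]) hu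
    (by rw [hv]; ring) hw (fun i hi => hM i (hi.trans n.le_succ)) hW
  have hquot : hankelDet D n v * hankelDet D (n + 1) u *
      (1 - orthogonalRatio D n h v / orthogonalRatio D n h u) =
        -(N + ν) * (hankelDet D n w * hankelDet D (n + 1) h) := by
    have hM₀ := hM n n.le_succ
    have hM₁ := hM (n + 1) le_rfl
    have hU₁ := hU (n + 1) le_rfl
    have hV₀ := hV n n.le_succ
    simp only [orthogonalRatio]
    field_simp
    linear_combination -hdarboux
  rw [← hquot, ← mul_one (hankelDet D n v * _), mul_assoc, painleveForm_mul_mul, one_mul,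
    painleveForm_orthogonalRatio_eq_zero hz hz₀ hN hν hu hv hvu hM hU hV, mul_zero]

variable {B : Type*} [CommRing B] [Algebra k B]

theorem exists_derivation_of_formallyEtale (C : Type*) [CommRing C] [Algebra k C] [Algebra B C]
    [IsScalarTower k B C] [Algebra.FormallyEtale B C] (D : Derivation k B B) :
    ∃ E : Derivation k C C, ∀ b, algebraMap B C (D b) = E (algebraMap B C b) := by
  let e := KaehlerDifferential.tensorKaehlerEquivOfFormallyEtale k B C
  let φ : TensorProduct B C Ω[B⁄k] →ₗ[C] C :=
    LinearMap.liftBaseChange C (Algebra.linearMap B C ∘ₗ D.liftKaehlerDifferential)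
  refine ⟨(φ ∘ₗ e.symm.toLinearMap).compDer (KaehlerDifferential.D k C), fun b => ?_⟩
  simp [φ, e, KaehlerDifferential.tensorKaehlerEquivOfFormallyEtale_symm_D_algebraMap]

variable [IsDomain B] {D : Derivation k B B} {h u v w z N ν : B}

theorem painleveForm_hankelDet (hz : D z = z) (hz₀ : z ≠ 0) (hN : D N = 0) (hν : D ν = 0)
    (hu : u = D h - N * h) (hv : v = D h + ν * h) (hw : w = D v - N * v) (hvu : D v = z * u)
    (hM : ∀ i ≤ n + 1, hankelDet D i h ≠ 0) (hU : ∀ i ≤ n + 1, hankelDet D i u ≠ 0)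
    (hV : ∀ i ≤ n + 1, hankelDet D i v ≠ 0) (hW : ∀ i < n, hankelDet D i w ≠ 0) :
    painleveForm D (N - n) (N + ν) (ν - 1 - n) z
      (-(N + ν) * (hankelDet D n w * hankelDet D (n + 1) h))
      (hankelDet D n v * hankelDet D (n + 1) u) = 0 := by
  have : Algebra.FormallyEtale B (FractionRing B) := .of_isLocalization (nonZeroDivisors B)
  obtain ⟨E, hE⟩ := exists_derivation_of_formallyEtale (FractionRing B) D
  have hinj := IsFractionRing.injective B (FractionRing B)
  have hdet {i : ℕ} {b : B} (hb : hankelDet D i b ≠ 0) : hankelDet E i (algebraMap B _ b) ≠ 0 := by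
    rw [← map_hankelDet hE]
    exact (map_ne_zero_iff _ hinj).2 hb
  refine (map_eq_zero_iff _ hinj).1 ?_
  simp only [map_painleveForm hE, map_mul, map_neg, map_add, map_sub, map_one, map_natCast,
    map_hankelDet hE]
  exact painleveForm_hankelDet_of_field (by rw [← hE, hz]) ((map_ne_zero_iff _ hinj).2 hz₀)
    (by rw [← hE, hN, map_zero]) (by rw [← hE, hν, map_zero]) (by simp [hu, hE])
    (by simp [hv, hE]) (by simp [hw, hE]) (by rw [← hE, hvu, map_mul])
    (fun i hi => hdet (hM i hi)) (fun i hi => hdet (hU i hi)) (fun i hi => hdet (hV i hi))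
    fun i hi => hdet (hW i hi)

end HankelSolution

section Laguerre

open Polynomial

variable {A A' : Type*} [CommRing A] [CommRing A']

variable (A) in
/-- The Euler operator `p ↦ X * p'` on polynomials, the algebraic counterpart of `z * d/dz`. -/
def euler : Derivation A A[X] A[X] :=
  mkDerivation A X

theorem euler_apply (p : A[X]) : euler A p = X * derivative p := by
  rw [euler, mkDerivation_apply, smul_eq_mul, mul_comm]

theorem euler_X : euler A X = X :=
  mkDerivation_X _ _

theorem euler_C (a : A) : euler A (C a) = 0 :=
  derivation_C _ a

theorem coeff_euler (p : A[X]) (k : ℕ) : (euler A p).coeff k = k * p.coeff k := by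
  cases k with
  | zero => simp [euler_apply]
  | succ k => rw [euler_apply, coeff_X_mul, coeff_derivative, Nat.cast_succ, mul_comm]

theorem map_euler (f : A →+* A') (p : A[X]) : (euler A p).map f = euler A' (p.map f) := by
  simp only [euler_apply, Polynomial.map_mul, map_X, derivative_map]

theorem succ_mul_choose_succ [BinomialRing A] (r : A) (j : ℕ) :
    (j + 1) * Ring.choose r (j + 1) = r * Ring.choose (r - 1) j := by
  simpa using Ring.choose_smul_choose r (Nat.succ_pos j)

theorem sub_mul_choose [BinomialRing A] (r : A) (j : ℕ) :
    (r - j) * Ring.choose r j = r * Ring.choose (r - 1) j := by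
  rw [← succ_mul_choose_succ, mul_comm]
  simpa using (Ring.choose_smul_choose r j.le_succ).symm

variable [Algebra ℚ A] [BinomialRing A] [Algebra ℚ A'] [BinomialRing A']

/-- The associated Laguerre polynomial `L_N^{(α)}` over an arbitrary commutative `ℚ`-algebra, so
that the parameter `α` may be an indeterminate. -/
def laguerre (N : ℕ) (α : A) : A[X] :=
  ∑ k ∈ range (N + 1), monomial k (((-1) ^ k / k.factorial : ℚ) • Ring.choose (N + α) (N - k))

theorem coeff_laguerre_of_le {N k : ℕ} (hk : k ≤ N) (α : A) :
    (laguerre N α).coeff k = ((-1) ^ k / k.factorial : ℚ) • Ring.choose (N + α) (N - k) := by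
  simp only [laguerre, finsetSum_coeff, coeff_monomial, Finset.sum_ite_eq', Finset.mem_range]
  exact if_pos (Nat.lt_succ_of_le hk)

theorem coeff_laguerre_of_lt {N k : ℕ} (hk : N < k) (α : A) : (laguerre N α).coeff k = 0 := by
  simp only [laguerre, finsetSum_coeff, coeff_monomial, Finset.sum_ite_eq', Finset.mem_range]
  exact if_neg (by omega)

theorem map_laguerre (f : A →+* A') (N : ℕ) (α : A) :
    (laguerre N α).map f = laguerre N (f α) := by
  simp only [laguerre, Polynomial.map_sum, map_monomial]
  simp only [map_rat_smul f, Ring.map_choose, map_add, map_natCast]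

theorem euler_laguerre_succ_sub (N : ℕ) (α : A) :
    euler A (laguerre (N + 1) α) - C (N + 1 : A) * laguerre (N + 1) α =
      C (-(N + 1 + α)) * laguerre N α := by
  ext k
  rw [coeff_sub, coeff_euler, coeff_C_mul, coeff_C_mul]
  obtain hk | rfl | hk := lt_trichotomy k (N + 1)
  · obtain ⟨j, rfl⟩ := Nat.exists_eq_add_of_le (Nat.le_of_lt_succ hk)
    rw [coeff_laguerre_of_le hk.le, coeff_laguerre_of_le (Nat.le_of_lt_succ hk),
      add_tsub_cancel_left, add_assoc k, add_tsub_cancel_left]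
    have hchoose := succ_mul_choose_succ (k + (j + 1) + α) j
    rw [show (k + (j + 1) + α - 1 : A) = k + j + α by ring] at hchoose
    simp only [Algebra.smul_def, Nat.cast_add, Nat.cast_one]
    linear_combination -algebraMap ℚ A ((-1) ^ k / k.factorial) * hchoose
  · rw [coeff_laguerre_of_lt N.lt_succ_self, Nat.cast_succ]
    ring
  · rw [coeff_laguerre_of_lt hk, coeff_laguerre_of_lt (N.lt_succ_self.trans hk)]
    ring

theorem euler_laguerre_add (N : ℕ) (α : A) :
    euler A (laguerre N α) + C α * laguerre N α = C (N + α) * laguerre N (α - 1) := by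
  ext k
  rw [coeff_add, coeff_euler, coeff_C_mul, coeff_C_mul]
  obtain hk | hk := le_or_gt k N
  · obtain ⟨j, rfl⟩ := Nat.exists_eq_add_of_le hk
    rw [coeff_laguerre_of_le hk, coeff_laguerre_of_le hk, add_tsub_cancel_left]
    have hchoose := sub_mul_choose ((k + j : ℕ) + α) j
    rw [add_sub_assoc _ α (1 : A), Nat.cast_add] at hchoose
    simp only [Algebra.smul_def, Nat.cast_add]
    linear_combination algebraMap ℚ A ((-1) ^ k / k.factorial) * hchoose
  · simp only [coeff_laguerre_of_lt hk, mul_zero, add_zero]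

theorem euler_laguerre_succ (N : ℕ) (α : A) :
    euler A (laguerre (N + 1) (α - 1)) = -(X * laguerre N α) := by
  ext k
  rw [coeff_euler, coeff_neg]
  cases k with
  | zero => simp
  | succ k =>
    rw [coeff_X_mul]
    obtain hk | hk := le_or_gt k N
    · rw [coeff_laguerre_of_le hk, coeff_laguerre_of_le (Nat.succ_le_succ hk), Nat.succ_sub_succ,
        Nat.cast_succ N, add_add_sub_cancel, ← nsmul_eq_mul, ← Nat.cast_smul_eq_nsmul ℚ, smul_smul,
        ← neg_smul, Nat.factorial_succ, Nat.succ_eq_add_one, pow_succ]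
      congr 1
      push_cast
      field_simp
    · rw [coeff_laguerre_of_lt hk, coeff_laguerre_of_lt (Nat.succ_lt_succ hk), mul_zero, neg_zero]

end Laguerre

section NonVanishing

open Polynomial

theorem posDef_hankel {n T : ℕ} (hn : n ≤ T) {x ω : Fin T → ℝ} (hx : Function.Injective x)
    (hω : ∀ k, 0 < ω k) :
    (Matrix.of fun i j : Fin n => ∑ k, ω k * x k ^ (i + j : ℕ)).PosDef := by
  let V : Matrix (Fin T) (Fin n) ℝ := Matrix.of fun k i => x k ^ (i : ℕ)
  have hV : Function.Injective V.mulVec := by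
    refine (injective_iff_map_eq_zero V.mulVecLin).2 fun c hc => ?_
    refine Matrix.eq_zero_of_forall_index_sum_mul_pow_eq_zero
      (hx.comp (Fin.castLE_injective hn)) fun j => ?_
    simpa [V, Matrix.mulVec, dotProduct, mul_comm] using congrFun hc (Fin.castLE hn j)
  have hfactor : (Matrix.of fun i j : Fin n => ∑ k, ω k * x k ^ (i + j : ℕ)) =
      V.conjTranspose * Matrix.diagonal ω * V := by
    ext i j
    rw [Matrix.mul_apply]
    simp only [V, Matrix.mul_diagonal, Matrix.conjTranspose_apply, Matrix.of_apply, star_trivial,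
      pow_add]
    exact Finset.sum_congr rfl fun k _ => by ring
  rw [hfactor]
  exact (Matrix.PosDef.diagonal hω).conjTranspose_mul_mul_same hV

theorem coeff_euler_iterate {A : Type*} [CommRing A] (p : A[X]) (i k : ℕ) :
    ((euler A)^[i] p).coeff k = k ^ i * p.coeff k := by
  induction i with
  | zero => simp
  | succ i ih => rw [Function.iterate_succ_apply', coeff_euler, ih, pow_succ', mul_assoc]

/- At `-1` the determinant becomes the Gram determinant of the monomials for the positive weights
`(-1) ^ k * p.coeff k` on the nodes `k = 0, …, p.natDegree`. -/
theorem hankelDet_euler_ne_zero_of_alternating {p : ℝ[X]}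
    (hp : ∀ k ≤ p.natDegree, 0 < p.coeff k * (-1) ^ k) {n : ℕ} (hn : n ≤ p.natDegree + 1) :
    hankelDet (euler ℝ) n p ≠ 0 := by
  have heval (i : ℕ) : ((euler ℝ)^[i] p).eval (-1) =
      ∑ k : Fin (p.natDegree + 1), p.coeff k * (-1) ^ (k : ℕ) * ((k : ℕ) : ℝ) ^ i := by
    have hdeg : ((euler ℝ)^[i] p).natDegree < p.natDegree + 1 :=
      Nat.lt_succ_of_le (natDegree_le_iff_coeff_eq_zero.2 fun k hk => by
        rw [coeff_euler_iterate, coeff_eq_zero_of_natDegree_lt hk, mul_zero])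
    rw [eval_eq_sum_range' hdeg, Fin.sum_univ_eq_sum_range fun k =>
      p.coeff k * (-1) ^ k * (k : ℝ) ^ i]
    exact Finset.sum_congr rfl fun k _ => by rw [coeff_euler_iterate]; ring
  have hpos : 0 < (hankelDet (euler ℝ) n p).eval (-1) := by
    rw [hankelDet, ← coe_evalRingHom, RingHom.map_det]
    refine lt_of_lt_of_eq (posDef_hankel hn (Nat.cast_injective.comp Fin.val_injective)
      fun k : Fin (p.natDegree + 1) => hp k (Nat.le_of_lt_succ k.2)).det_pos (congrArg _ ?_)
    exact Matrix.ext fun i j => (heval _).symm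
  intro hzero
  rw [hzero, eval_zero] at hpos
  exact hpos.false

theorem choose_eq_descPochhammer_div {K : Type*} [Field K] [CharZero K] (x : K) (k : ℕ) :
    Ring.choose x k = (descPochhammer K k).eval x / k.factorial := by
  rw [Ring.choose_eq_smul, ← aeval_eq_smeval, ← descPochhammer_map (algebraMap ℤ K),
    eval_map_algebraMap, smul_eq_mul, inv_mul_eq_div]

theorem natDegree_laguerre {α : ℝ} (N : ℕ) : (laguerre N α).natDegree = N := by
  refine natDegree_eq_of_le_of_coeff_ne_zero
    (natDegree_le_iff_coeff_eq_zero.2 fun k hk => coeff_laguerre_of_lt hk α) ?_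
  rw [coeff_laguerre_of_le le_rfl, Nat.sub_self, Ring.choose_zero_right]
  positivity

theorem coeff_laguerre_mul_neg_one_pow_pos {N k : ℕ} (hk : k ≤ N) {α : ℝ} (hα : -1 < α) :
    0 < (laguerre N α).coeff k * (-1) ^ k := by
  have hchoose : 0 < Ring.choose (N + α) (N - k) := by
    rw [choose_eq_descPochhammer_div]
    refine div_pos (descPochhammer_pos ?_) (mod_cast (N - k).factorial_pos)
    rw [Nat.cast_sub hk]
    linarith [(Nat.cast_nonneg k : (0 : ℝ) ≤ k)]
  have hsign : (-1 : ℝ) ^ k * (-1) ^ k = 1 := by rw [← mul_pow]; norm_num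
  rw [coeff_laguerre_of_le hk, Rat.smul_def]
  push_cast
  rw [mul_right_comm, div_mul_eq_mul_div, hsign]
  positivity

end NonVanishing

section LaguerreTau

open Polynomial

variable {A : Type*} [CommRing A]

theorem hankelDet_C_mul (c : A) (n : ℕ) (p : A[X]) :
    hankelDet (euler A) n (C c * p) = C c ^ n * hankelDet (euler A) n p :=
  hankelDet_mul_of_derivation_eq_smul (euler A) (c := (0 : A)) (by rw [euler_C, zero_smul]) n p

variable [Algebra ℚ A] [BinomialRing A]

/-- The determinant `τ` of iterated Euler derivatives of `L_N^{(α)}`. It is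
`τ_{m,n}^{(μ)}` for `N = m + n` and `α = n + μ`. -/
def laguerreTau (N n : ℕ) (α : A) : A[X] :=
  hankelDet (euler A) n (laguerre N α)

theorem map_laguerreTau {A' : Type*} [CommRing A'] [Algebra ℚ A'] [BinomialRing A'] (f : A →+* A')
    (N n : ℕ) (α : A) : (laguerreTau N n α).map f = laguerreTau N n (f α) := by
  rw [laguerreTau, laguerreTau, ← map_laguerre]
  exact map_hankelDet (f := mapRingHom f) (map_euler f) n (laguerre N α)

theorem laguerreTau_ne_zero (f : A →+* ℝ) {α : A} (hα : -1 < f α) {N n : ℕ} (hn : n ≤ N + 1) :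
    laguerreTau N n α ≠ 0 := by
  suffices hspec : laguerreTau N n (f α) ≠ 0 by
    rw [← map_laguerreTau] at hspec
    exact fun hzero => hspec (by rw [hzero, Polynomial.map_zero])
  have hdeg := natDegree_laguerre (α := f α) N
  refine hankelDet_euler_ne_zero_of_alternating (fun k hk => ?_) (by rwa [hdeg])
  exact coeff_laguerre_mul_neg_one_pow_pos (by rwa [hdeg] at hk) hα

theorem hankelDet_C_mul_laguerre_ne_zero [IsDomain A] (f : A →+* ℝ) {c α : A} (hc : f c ≠ 0)
    (hα : -1 < f α) {N n : ℕ} (hn : n ≤ N + 1) :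
    hankelDet (euler A) n (C c * laguerre N α) ≠ 0 := by
  have hc₀ : c ≠ 0 := ne_of_apply_ne f (by rwa [map_zero])
  rw [hankelDet_C_mul]
  exact mul_ne_zero (pow_ne_zero n (C_ne_zero.2 hc₀)) (laguerreTau_ne_zero f hα hn)

theorem euler_laguerre_pred_succ_sub (N : ℕ) (ν : A) :
    euler A (laguerre (N + 1) (ν - 1)) - C (N + 1 : A) * laguerre (N + 1) (ν - 1) =
      C (-(N + ν)) * laguerre N (ν - 1) := by
  rw [euler_laguerre_succ_sub, add_add_sub_cancel]

theorem painleveForm_hankelDet_laguerre [IsDomain A] (f : A →+* ℝ) {ν : A} (hν : 0 < f ν)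
    {N n : ℕ} (hn : n ≤ N) :
    painleveForm (euler A) (C (N + 1 : A) - n) (C (N + 1 : A) + C ν) (C ν - 1 - n) X
      (-(C (N + 1 : A) + C ν) *
        (hankelDet (euler A) n (C (-((N + 1 + ν) * (N + ν))) * laguerre N (ν - 1)) *
          hankelDet (euler A) (n + 1) (laguerre (N + 1) ν)))
      (hankelDet (euler A) n (C (N + 1 + ν) * laguerre (N + 1) (ν - 1)) *
        hankelDet (euler A) (n + 1) (C (-(N + 1 + ν)) * laguerre N ν)) = 0 := by
  have hα : -1 < f ν := by linarith
  have hα' : -1 < f (ν - 1) := by simpa using hν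
  have hc : 0 < f (N + 1 + ν) := by simp only [map_add, map_natCast, map_one]; positivity
  have hd : 0 < f (N + ν) := by simp only [map_add, map_natCast]; positivity
  have hc' : f (-(N + 1 + ν)) ≠ 0 := by rw [map_neg]; exact neg_ne_zero.2 hc.ne'
  have hcd : f (-((N + 1 + ν) * (N + ν))) ≠ 0 := by
    rw [map_neg, map_mul]
    exact neg_ne_zero.2 (mul_pos hc hd).ne'
  refine painleveForm_hankelDet euler_X X_ne_zero (euler_C _) (euler_C _)
    (euler_laguerre_succ_sub N ν).symm ?_ ?_ ?_ (fun i hi => laguerreTau_ne_zero f hα (by omega))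
    (fun i hi => hankelDet_C_mul_laguerre_ne_zero f hc' hα (by omega))
    (fun i hi => hankelDet_C_mul_laguerre_ne_zero f hc.ne' hα' (by omega))
    (fun i hi => hankelDet_C_mul_laguerre_ne_zero f hcd hα' (by omega))
  · rw [euler_laguerre_add, Nat.cast_succ]
  · have hlag := euler_laguerre_pred_succ_sub N ν
    simp only [Derivation.leibniz, euler_C, smul_eq_mul, C_neg, C_mul] at hlag ⊢
    linear_combination -C (N + 1 + ν) * hlag
  · simp only [Derivation.leibniz, euler_C, euler_laguerre_succ, smul_eq_mul, C_neg]
    ring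

theorem painleveForm_laguerreTau_of_pos [IsDomain A] (f : A →+* ℝ) {ν : A} (hν : 0 < f ν)
    {N n : ℕ} (hn : n ≤ N) :
    painleveForm (euler A) (C (N + 1 - n : A)) (C (N + 1 + ν)) (C (ν - 1 - n)) X
      (C (N + ν) ^ n * (laguerreTau N n (ν - 1) * laguerreTau (N + 1) (n + 1) ν))
      (C (N + 1 + ν) ^ n * (laguerreTau (N + 1) n (ν - 1) * laguerreTau N (n + 1) ν)) = 0 := by
  have hc : (-C (N + 1 + ν : A)) ^ (n + 1) ≠ 0 := by
    refine pow_ne_zero _ (neg_ne_zero.2 (C_ne_zero.2 (ne_of_apply_ne f ?_)))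
    simp only [map_add, map_natCast, map_one, map_zero]
    positivity
  have hform := painleveForm_hankelDet_laguerre f hν hn
  simp only [hankelDet_C_mul] at hform
  refine (mul_eq_zero.1 ?_).resolve_left (pow_ne_zero 5 hc)
  rw [← painleveForm_mul_mul, ← hform]
  congr 1
  · simp
  · simp
  · simp
  · simp only [laguerreTau, C_neg, C_mul, ← C_add]
    ring
  · simp only [laguerreTau, C_neg]
    ring

/- For an indeterminate `ν` the determinants are nonzero, because they are so at `ν = 1`; the
generic identity then specialises to every `ν`. -/
theorem painleveForm_laguerreTau (ν : ℝ) {N n : ℕ} (hn : n ≤ N) :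
    painleveForm (euler ℝ) (C (N + 1 - n : ℝ)) (C (N + 1 + ν)) (C (ν - 1 - n)) X
      (C (N + ν) ^ n * (laguerreTau N n (ν - 1) * laguerreTau (N + 1) (n + 1) ν))
      (C (N + 1 + ν) ^ n * (laguerreTau (N + 1) n (ν - 1) * laguerreTau N (n + 1) ν)) = 0 := by
  let evalAt (x : ℝ) : ℚ[X] →+* ℝ := (aeval x).toRingHom
  have hX (x : ℝ) : evalAt x X = x := aeval_X x
  have hgeneric := painleveForm_laguerreTau_of_pos (evalAt 1) (ν := X)
    (by rw [hX]; exact one_pos) hn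
  have hmap := congrArg (mapRingHom (evalAt ν)) hgeneric
  rw [map_painleveForm (map_euler _)] at hmap
  simpa only [map_mul, map_pow, map_zero, coe_mapRingHom, map_C, map_X, map_laguerreTau, map_add,
    map_sub, map_natCast, map_one, hX] using hmap

theorem painleveForm_laguerreTau_normalized {N n : ℕ} {ν : ℝ} (hc : N + ν + 1 ≠ 0)
    (hn : n ≤ N) :
    painleveForm (euler ℝ) (C (N + 1 - n : ℝ)) (C (N + ν + 1)) (C (ν - 1 - n)) X
      (C (((N + ν) / (N + ν + 1)) ^ n) *
        (laguerreTau N n (ν - 1) * laguerreTau (N + 1) (n + 1) ν))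
      (laguerreTau (N + 1) n (ν - 1) * laguerreTau N (n + 1) ν) = 0 := by
  have hscale : C (N + ν + 1) ^ n * C (((N + ν) / (N + ν + 1)) ^ n) = C (N + ν : ℝ) ^ n := by
    rw [← C_pow, ← C_mul, ← mul_pow, mul_div_cancel₀ _ hc, C_pow]
  have hform := painleveForm_laguerreTau ν hn
  rw [add_right_comm (N : ℝ) 1 ν, ← hscale, mul_assoc, painleveForm_mul_mul] at hform
  exact (mul_eq_zero.1 hform).resolve_left (pow_ne_zero 5 (pow_ne_zero n (C_ne_zero.2 hc)))

end LaguerreTau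

section AnalyticBridge

open Polynomial

theorem genBinom_eq_choose (x : ℝ) (k : ℕ) : genBinom x k = Ring.choose x k := by
  rw [choose_eq_descPochhammer_div, descPochhammer_eval_eq_prod_range, genBinom]

theorem lagL_eq_eval_laguerre (N : ℕ) (α : ℝ) : lagL N α = ((laguerre N α).eval ·) := by
  funext z
  simp only [lagL, laguerre, Int.toNat_natCast, Int.cast_natCast, eval_finsetSum, eval_monomial,
    genBinom_eq_choose, Rat.smul_def]
  rw [if_neg (by omega)]
  refine Finset.sum_congr rfl fun k _ => ?_
  push_cast
  ring

theorem eval_euler (p : ℝ[X]) (z : ℝ) : (euler ℝ p).eval z = z * p.derivative.eval z := by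
  rw [euler_apply, eval_mul, eval_X]

theorem iterate_mul_deriv_eval (p : ℝ[X]) (j : ℕ) :
    (fun (g : ℝ → ℝ) t => t * deriv g t)^[j] (p.eval ·) =
      (((euler ℝ)^[j] p).eval ·) := by
  induction j with
  | zero => rfl
  | succ j ih =>
    funext t
    rw [Function.iterate_succ_apply', Function.iterate_succ_apply', ih, eval_euler,
      Polynomial.deriv]

theorem tauP_eq_eval_laguerreTau {M : ℤ} {n N : ℕ} {μ α : ℝ} (hN : M + n = N) (hα : n + μ = α) :
    tauP M n μ = ((laguerreTau N n α).eval ·) := by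
  funext z
  rw [tauP, laguerreTau, hankelDet, ← coe_evalRingHom, RingHom.map_det, hN, hα,
    lagL_eq_eval_laguerre]
  congr 1
  ext j k
  exact congrFun (iterate_mul_deriv_eval _ _) z

variable {A Q : ℝ[X]} {z : ℝ} (hQ : Q.eval z ≠ 0)
include hQ

theorem deriv_eval_div_eval : deriv (fun t => A.eval t / Q.eval t) z =
    (A.derivative * Q - A * Q.derivative).eval z / (Q ^ 2).eval z := by
  rw [((A.hasDerivAt z).fun_div (Q.hasDerivAt z) hQ).deriv]
  simp only [eval_sub, eval_mul, eval_pow]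

theorem iteratedDeriv_two_eval_div_eval : iteratedDeriv 2 (fun t => A.eval t / Q.eval t) z =
    ((A.derivative.derivative * Q - A * Q.derivative.derivative) * Q -
      2 * Q.derivative * (A.derivative * Q - A * Q.derivative)).eval z / (Q ^ 3).eval z := by
  have hderiv : deriv (fun t => A.eval t / Q.eval t) =ᶠ[nhds z]
      fun t => (A.derivative * Q - A * Q.derivative).eval t / (Q ^ 2).eval t := by
    filter_upwards [Q.continuous.continuousAt.eventually_ne hQ] with t ht
    exact deriv_eval_div_eval ht
  have hQ2 : (Q ^ 2).eval z ≠ 0 := by simpa using hQ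
  rw [iteratedDeriv_succ, iteratedDeriv_one, hderiv.deriv_eq, deriv_eval_div_eval hQ2]
  simp only [derivative_sub, derivative_mul, derivative_pow, eval_sub, eval_add, eval_mul,
    eval_pow, eval_ofNat, map_natCast, eval_natCast]
  field_simp
  push_cast
  ring

theorem PV_of_painleveForm_eq_zero {a κ γ : ℝ} {w : ℝ → ℝ} (hw : w = fun t => A.eval t / Q.eval t)
    (hz : z ≠ 0) (hw₀ : w z ≠ 0) (hw₁ : w z ≠ 1)
    (hform : painleveForm (euler ℝ) (C a) (C κ) (C γ) X A Q = 0) :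
    PV (a ^ 2 / 2) (-κ ^ 2 / 2) γ w z := by
  have hw₁' : w z - 1 ≠ 0 := sub_ne_zero.2 hw₁
  have hA : A.eval z = w z * Q.eval z := by rw [hw, div_mul_cancel₀ _ hQ]
  have hA' : A.derivative.eval z = deriv w z * Q.eval z + w z * Q.derivative.eval z := by
    rw [hw, deriv_eval_div_eval hQ]
    simp only [eval_sub, eval_mul, eval_pow]
    field_simp
    ring
  have hA'' : A.derivative.derivative.eval z = iteratedDeriv 2 w z * Q.eval z +
      2 * deriv w z * Q.derivative.eval z + w z * Q.derivative.derivative.eval z := by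
    rw [hw, iteratedDeriv_two_eval_div_eval hQ, deriv_eval_div_eval hQ]
    simp only [eval_sub, eval_mul, eval_pow, eval_ofNat]
    field_simp
    ring
  have heval := congrArg (eval z) hform
  simp only [painleveForm, euler_apply, derivative_sub, derivative_mul, derivative_X, one_mul,
    eval_sub, eval_add, eval_mul, eval_pow, eval_ofNat, eval_C, eval_X, eval_zero, hA, hA', hA'']
    at heval
  rw [PV]
  field_simp
  apply mul_left_cancel₀ (pow_ne_zero 5 hQ)
  linear_combination heval

end AnalyticBridge

/-- rational solutions of `P_V` in terms of `τ_{m,n}^{(μ)}`. -/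
theorem pv_rational_solution_tau (m n : ℕ) (hm : 1 ≤ m) (hn : 1 ≤ n) (μ : ℝ)
    (hden : (m : ℝ) + μ + 2 * n + 1 ≠ 0) (w : ℝ → ℝ)
    (hw : w = fun z =>
      (((m : ℝ) + μ + 2 * n) / ((m : ℝ) + μ + 2 * n + 1)) ^ n *
        (tauP ((m : ℤ) - 1) n μ z * tauP ((m : ℤ) - 1) (n + 1) μ z) /
        (tauP (m : ℤ) n μ z * tauP ((m : ℤ) - 2) (n + 1) μ z)) :
    ∀ z : ℝ, z ≠ 0 → tauP (m : ℤ) n μ z * tauP ((m : ℤ) - 2) (n + 1) μ z ≠ 0 →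
      w z ≠ 0 → w z ≠ 1 →
      PV ((m : ℝ) ^ 2 / 2) (-((m : ℝ) + 2 * n + 1 + μ) ^ 2 / 2) μ w z := by
  intro z hz hQ hw₀ hw₁
  obtain ⟨l, rfl⟩ := Nat.exists_eq_add_of_le' hm
  obtain ⟨ν, rfl⟩ : ∃ ν, μ = ν - 1 - n := ⟨n + 1 + μ, by ring⟩
  have hτ₁ : tauP ((l + 1 : ℕ) - 1) n (ν - 1 - n) = ((laguerreTau (l + n) n (ν - 1)).eval ·) :=
    tauP_eq_eval_laguerreTau (by push_cast; ring) (by ring)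
  have hτ₂ : tauP ((l + 1 : ℕ) - 1) (n + 1) (ν - 1 - n) =
      ((laguerreTau (l + n + 1) (n + 1) ν).eval ·) :=
    tauP_eq_eval_laguerreTau (by push_cast; ring) (by push_cast; ring)
  have hτ₃ : tauP (l + 1 : ℕ) n (ν - 1 - n) = ((laguerreTau (l + n + 1) n (ν - 1)).eval ·) :=
    tauP_eq_eval_laguerreTau (by push_cast; ring) (by ring)
  have hτ₄ : tauP ((l + 1 : ℕ) - 2) (n + 1) (ν - 1 - n) =
      ((laguerreTau (l + n) (n + 1) ν).eval ·) :=
    tauP_eq_eval_laguerreTau (by push_cast; ring) (by push_cast; ring)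
  have hd : ((l + 1 : ℕ) : ℝ) + (ν - 1 - n) + 2 * n = (l + n : ℕ) + ν := by push_cast; ring
  simp only [hτ₁, hτ₂, hτ₃, hτ₄, hd] at hw hQ hden
  have hform := painleveForm_laguerreTau_normalized hden (Nat.le_add_left n l)
  convert PV_of_painleveForm_eq_zero (by rwa [Polynomial.eval_mul]) ?_ hz hw₀ hw₁ hform using 2
  · push_cast; ring
  · push_cast; ring
  · simpa only [Polynomial.eval_mul, Polynomial.eval_C] using hw
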